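/- Let ε_1,…,ε_n be random variables with E[ε_i] = 0 and a_i ≤ ε_i ≤ b_i almost surely, where a_i < b_i, [a_i, b_i] ⊆ [−M, M] for some M > 0, and (a_i + b_i)/2 ≤ 0 for every i. Let w > 0 and S_n = w · Σ_{i=1}^n ε_i. Set v_i = (b_i − a_i)⁻¹ ∫_{a_i}^{b_i} z² dz and V = Σ_{i=1}^n v_i, and define h(u) = (1+u)·log(1+u) − u. Assume V > 0 and that for every s > 0, max( E[exp(s S_n)], E[exp(−s S_n)] ) ≤ Π_{i=1}^n (b_i − a_i)⁻¹ ∫_{a_i}^{b_i} exp(s w z) dz. Then for every τ > 0, P(|S_n| > τ) ≤ 2 exp( −M⁻² · V · h( τM / (wV) ) ). -/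

import Mathlib

/-!
The proof is the Cramér–Chernoff method. For `|x| ≤ c` every term of the exponential series of
order `k ≥ 2` satisfies `c ^ 2 * x ^ k ≤ x ^ 2 * c ^ k`, whence
`exp x ≤ 1 + x + x ^ 2 / c ^ 2 * (exp c - 1 - c)` (`sq_mul_exp_sub_le`). Averaging this at
`x = t z` over `[a, b] ⊆ [-M, M]`, with `c = t M`, the linear term is nonpositive because the
midpoint of `[a, b]` is, so the average of `exp (t z)` is at most
`exp (v / M ^ 2 * (exp (t M) - 1 - t M))`, where `v` is the average of `z ^ 2` (`average_exp_le`). Multiplying over `i`, the mgf hypothesis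
bounds both exponential moments by `exp (V / M ^ 2 * (exp c - 1 - c))` with `c = s w M`. Markov's
inequality on each tail, with `c = log (1 + τ M / (w V))`, gives the Bennett exponent.
-/

open MeasureTheory

/-- Bennett's elementary inequality: `(exp x - 1 - x) / x ^ 2` at `x` is at most its value at
`c ≥ |x|`. -/
lemma sq_mul_exp_sub_le {x c : ℝ} (hxc : |x| ≤ c) :
    c ^ 2 * (Real.exp x - 1 - x) ≤ x ^ 2 * (Real.exp c - 1 - c) := by
  have key : ∀ y : ℝ,
      HasSum (fun k : ℕ => y ^ (k + 2) / ((k + 2).factorial : ℝ)) (Real.exp y - 1 - y) := by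
    intro y
    have h := NormedSpace.expSeries_div_hasSum_exp (𝔸 := ℝ) y
    rw [← Real.exp_eq_exp_ℝ] at h
    have h2 := (hasSum_nat_add_iff' 2).2 h
    simpa [Finset.sum_range_succ, sub_sub] using h2
  refine hasSum_le (fun k => ?_) ((key x).mul_left (c ^ 2)) ((key c).mul_left (x ^ 2))
  have h1 : x ^ k ≤ c ^ k :=
    (le_abs_self _).trans ((abs_pow x k).le.trans (pow_le_pow_left₀ (abs_nonneg x) hxc k))
  calc c ^ 2 * (x ^ (k + 2) / ((k + 2).factorial : ℝ))
      = (c ^ 2 * x ^ 2 / ((k + 2).factorial : ℝ)) * x ^ k := by ring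
    _ ≤ (c ^ 2 * x ^ 2 / ((k + 2).factorial : ℝ)) * c ^ k :=
        mul_le_mul_of_nonneg_left h1 (by positivity)
    _ = x ^ 2 * (c ^ (k + 2) / ((k + 2).factorial : ℝ)) := by ring

/-- The mgf of the uniform law on `[a, b] ⊆ [-M, M]` with nonpositive midpoint is bounded by
that of `M * (N - λ)`, `N` Poisson of mean `λ = v / M ^ 2`, whose variance is the average `v` of
`z ^ 2` over `[a, b]`. -/
lemma average_exp_le {a b M t : ℝ} (hab : a < b) (hM : 0 < M)
    (hIcc : Set.Icc a b ⊆ Set.Icc (-M) M) (hmid : (a + b) / 2 ≤ 0) (ht : 0 < t) :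
    (b - a)⁻¹ * ∫ z in a..b, Real.exp (t * z) ≤
      Real.exp (((b - a)⁻¹ * ∫ z in a..b, z ^ 2) *
        ((M ^ 2)⁻¹ * (Real.exp (t * M) - 1 - t * M))) := by
  set K := (M ^ 2)⁻¹ * (Real.exp (t * M) - 1 - t * M) with hK
  have hba : 0 < b - a := sub_pos.2 hab
  have hpt : ∀ z ∈ Set.Icc a b, Real.exp (t * z) ≤ 1 + t * z + K * z ^ 2 := by
    intro z hz
    have hz' : |z| ≤ M := abs_le.2 (hIcc hz)
    have h := sq_mul_exp_sub_le (x := t * z) (c := t * M) (by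
      rw [abs_mul, abs_of_pos ht]; gcongr)
    have hKM : Real.exp (t * M) - 1 - t * M = K * M ^ 2 := by
      rw [hK]; field_simp
    rw [hKM] at h
    have h3 : Real.exp (t * z) - 1 - t * z ≤ K * z ^ 2 := by
      refine le_of_mul_le_mul_left ?_ (show 0 < (t * M) ^ 2 by positivity)
      linarith [h, show (t * z) ^ 2 * (K * M ^ 2) = (t * M) ^ 2 * (K * z ^ 2) by ring]
    linarith
  have hint : ∫ z in a..b, Real.exp (t * z) ≤ ∫ z in a..b, (1 + t * z + K * z ^ 2) :=
    intervalIntegral.integral_mono_on hab.le (Continuous.intervalIntegrable (by fun_prop) _ _)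
      (Continuous.intervalIntegrable (by fun_prop) _ _) hpt
  have hcalc : ∫ z in a..b, (1 + t * z + K * z ^ 2) =
      (b - a) * (1 + t * ((a + b) / 2)) + K * ∫ z in a..b, z ^ 2 := by
    rw [intervalIntegral.integral_add (Continuous.intervalIntegrable (by fun_prop) _ _)
        (Continuous.intervalIntegrable (by fun_prop) _ _),
      intervalIntegral.integral_add (Continuous.intervalIntegrable (by fun_prop) _ _)
        (Continuous.intervalIntegrable (by fun_prop) _ _),
      intervalIntegral.integral_const_mul, intervalIntegral.integral_const_mul]
    simp
    ring
  have hlin : t * ((a + b) / 2) ≤ 0 := mul_nonpos_of_nonneg_of_nonpos ht.le hmid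
  calc (b - a)⁻¹ * ∫ z in a..b, Real.exp (t * z)
      ≤ (b - a)⁻¹ * ((b - a) * (1 + t * ((a + b) / 2)) + K * ∫ z in a..b, z ^ 2) := by
        rw [← hcalc]
        exact mul_le_mul_of_nonneg_left hint (inv_nonneg.2 hba.le)
    _ = 1 + t * ((a + b) / 2) + ((b - a)⁻¹ * ∫ z in a..b, z ^ 2) * K := by
        field_simp
    _ ≤ ((b - a)⁻¹ * ∫ z in a..b, z ^ 2) * K + 1 := by linarith
    _ ≤ _ := Real.add_one_le_exp _

/-- Bennett-type inequality for densely dependent sub-𝒰 random variables: under condition A5,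
with `h(u) = (1+u)log(1+u) − u`, `V = Σ v_i`, and `S_n = w Σ ε_i`,
`P(|S_n| > τ) ≤ 2 exp(−M⁻² V h(τM/(wV)))`. -/
theorem statement_17 {Ω : Type*} {mΩ : MeasurableSpace Ω} (μ : Measure Ω)
    [IsProbabilityMeasure μ] (n : ℕ) (ε : Fin n → Ω → ℝ) (a b : Fin n → ℝ) (M w : ℝ)
    (hmeas : ∀ i, AEMeasurable (ε i) μ)
    (hmean : ∀ i, ∫ ω, ε i ω ∂μ = 0)
    (hbdd : ∀ i, ∀ᵐ ω ∂μ, ε i ω ∈ Set.Icc (a i) (b i))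
    (hab : ∀ i, a i < b i) (hM : 0 < M)
    (hIcc : ∀ i, Set.Icc (a i) (b i) ⊆ Set.Icc (-M) M)
    (hsubU : ∀ i, (a i + b i) / 2 ≤ 0)
    (hw : 0 < w)
    (S : Ω → ℝ) (hS : ∀ ω, S ω = w * ∑ i, ε i ω)
    (v : Fin n → ℝ) (hv : ∀ i, v i = (b i - a i)⁻¹ * ∫ z in (a i)..(b i), z ^ 2)
    (V : ℝ) (hV : V = ∑ i, v i) (hVpos : 0 < V)
    (h : ℝ → ℝ) (hh : ∀ u, h u = (1 + u) * Real.log (1 + u) - u)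
    (hA5 : ∀ s : ℝ, 0 < s →
      max (∫ ω, Real.exp (s * S ω) ∂μ) (∫ ω, Real.exp (-s * S ω) ∂μ) ≤
        ∏ i, (b i - a i)⁻¹ * ∫ z in (a i)..(b i), Real.exp (s * w * z)) :
    ∀ τ : ℝ, 0 < τ →
      (μ {ω | τ < |S ω|}).toReal ≤
        2 * Real.exp (-(M ^ 2)⁻¹ * V * h (τ * M / (w * V))) := by
  intro τ hτ
  have hSb : ∀ᵐ ω ∂μ, S ω ∈ Set.Icc (w * ∑ i, a i) (w * ∑ i, b i) := by
    filter_upwards [ae_all_iff.2 hbdd] with ω hω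
    rw [hS]
    exact ⟨mul_le_mul_of_nonneg_left (Finset.sum_le_sum fun i _ => (hω i).1) hw.le,
      mul_le_mul_of_nonneg_left (Finset.sum_le_sum fun i _ => (hω i).2) hw.le⟩
  have hSm : AEMeasurable S μ := by
    rw [funext hS]
    exact (Finset.aemeasurable_fun_sum _ fun i _ => hmeas i).const_mul w
  set u := τ * M / (w * V) with hu
  have hu0 : 0 < u := by positivity
  -- The minimiser of `s ↦ -s τ + V / M ^ 2 * (exp (s w M) - 1 - s w M)`.
  set s := Real.log (1 + u) / (w * M) with hs
  have hlog : 0 < Real.log (1 + u) := Real.log_pos (by linarith)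
  have hs0 : 0 < s := by positivity
  have hswM : s * w * M = Real.log (1 + u) := by rw [hs]; field_simp
  have hprod : ∏ i, (b i - a i)⁻¹ * ∫ z in (a i)..(b i), Real.exp (s * w * z) ≤
      Real.exp (V * ((M ^ 2)⁻¹ * (u - Real.log (1 + u)))) := by
    rw [hV, Finset.sum_mul, Real.exp_sum]
    refine Finset.prod_le_prod (fun i _ => ?_) (fun i _ => ?_)
    · exact mul_nonneg (inv_nonneg.2 (sub_nonneg.2 (hab i).le))
        (intervalIntegral.integral_nonneg (hab i).le fun z _ => (Real.exp_pos _).le)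
    · have h1 := average_exp_le (hab i) hM (hIcc i) (hsubU i) (mul_pos hs0 hw)
      rw [hswM, Real.exp_log (by linarith), ← hv i, add_sub_cancel_left] at h1
      exact h1
  have hmax := (hA5 s hs0).trans hprod
  have hexp : Real.exp (-s * τ) * Real.exp (V * ((M ^ 2)⁻¹ * (u - Real.log (1 + u)))) =
      Real.exp (-(M ^ 2)⁻¹ * V * h u) := by
    rw [← Real.exp_add, hh]
    congr 1
    have hsτ : s * τ = Real.log (1 + u) * u * V * (M ^ 2)⁻¹ := by
      rw [hs, hu]; field_simp
    linear_combination -hsτ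
  have hpos : μ.real {ω | τ ≤ S ω} ≤ Real.exp (-(M ^ 2)⁻¹ * V * h u) := by
    rw [← hexp]
    refine (ProbabilityTheory.measure_ge_le_exp_mul_mgf τ hs0.le
      (ProbabilityTheory.integrable_exp_mul_of_mem_Icc hSm hSb)).trans ?_
    exact mul_le_mul_of_nonneg_left ((le_max_left _ _).trans hmax) (Real.exp_pos _).le
  have hneg : μ.real {ω | S ω ≤ -τ} ≤ Real.exp (-(M ^ 2)⁻¹ * V * h u) := by
    rw [← hexp]
    have h1 := ProbabilityTheory.measure_le_le_exp_mul_mgf (-τ) (neg_nonpos.2 hs0.le)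
      (ProbabilityTheory.integrable_exp_mul_of_mem_Icc hSm hSb)
    rw [neg_neg, mul_neg, ← neg_mul] at h1
    exact h1.trans
      (mul_le_mul_of_nonneg_left ((le_max_right _ _).trans hmax) (Real.exp_pos _).le)
  have hsub : {ω | τ < |S ω|} ⊆ {ω | τ ≤ S ω} ∪ {ω | S ω ≤ -τ} := by
    intro ω hω
    rcases lt_abs.1 (show τ < |S ω| from hω) with h1 | h1
    · exact Or.inl h1.le
    · exact Or.inr (show S ω ≤ -τ by linarith)
  calc (μ {ω | τ < |S ω|}).toReal ≤ μ.real ({ω | τ ≤ S ω} ∪ {ω | S ω ≤ -τ}) :=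
        measureReal_mono hsub
    _ ≤ μ.real {ω | τ ≤ S ω} + μ.real {ω | S ω ≤ -τ} := measureReal_union_le _ _
    _ ≤ 2 * Real.exp (-(M ^ 2)⁻¹ * V * h u) := by linarith
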